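/- arXiv:2006.09210 — 4 statements merged into one kernel-verified Lean document; each statement's English description precedes it below -/
import Mathlib

section
/- Let (H,α,R) be a triangular Hom-Hopf algebra and (B,β) a Hom-Hopf algebra. (i) Every left (H,α)-Hom-module (M,·,μ) becomes an (H,B)-Hom-Long dimodule with coaction ρ(m)=1_B⊗μ(m); moreover every morphism of left (H,α)-Hom-modules is then also B-colinear. (ii) For left (H,α)-Hom-modules (M,μ_M),(N,ν_N), the maps C_{M,N}:M⊗N→N⊗M, C_{M,N}(m⊗n)=R²·ν_N⁻¹(n)⊗R¹·μ_M⁻¹(m), satisfy C_{N,M}∘C_{M,N}=id_{M⊗N}. -/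
/-!
The trivial coaction `m ↦ 1 ⊗ μ(m)` satisfies the dimodule axioms because `1_B` is fixed by `β`,
grouplike and of counit one.

For the symmetry, `R` may be replaced by `(α ⊗ α)(R)` in both braidings, since `R` is
`α`-invariant. Then `μ⁻¹(α(R¹)·x) = R¹·μ⁻¹(x)` and `α(r²)·(R¹·x) = (r²R¹)·μ(x)` turn the composite
`C_{N,M} ∘ C_{M,N}` into the action of `r²R¹ ⊗ r¹R²` on `μ⁻¹(m) ⊗ ν⁻¹(n)`
(`braidQT_auto_braidQT_auto`). Triangularity makes this element `1 ⊗ 1`, which acts as `μ ⊗ ν`.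
-/

open TensorProduct

/-- A Hom-bialgebra `(H, α)` over a field `k`. -/
structure HomBialgebra (k : Type*) [Field k] (H : Type*) [AddCommGroup H] [Module k H] where
  mul : H →ₗ[k] H →ₗ[k] H
  one : H
  comul : H →ₗ[k] H ⊗[k] H
  counit : H →ₗ[k] k
  auto : H ≃ₗ[k] H
  auto_mul : ∀ h h' : H, auto (mul h h') = mul (auto h) (auto h')
  auto_one : auto one = one
  hom_assoc : ∀ h h' h'' : H, mul (auto h) (mul h' h'') = mul (mul h h') (auto h'')
  mul_one' : ∀ h : H, mul h one = auto h
  one_mul' : ∀ h : H, mul one h = auto h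
  comul_auto : ∀ h : H,
    comul (auto h) = TensorProduct.map auto.toLinearMap auto.toLinearMap (comul h)
  counit_auto : ∀ h : H, counit (auto h) = counit h
  hom_coassoc : ∀ h : H,
    TensorProduct.map auto.toLinearMap comul (comul h)
      = TensorProduct.assoc k H H H (TensorProduct.map comul auto.toLinearMap (comul h))
  counit_comul : ∀ h : H,
    TensorProduct.lid k H (TensorProduct.map counit (LinearMap.id : H →ₗ[k] H) (comul h)) = auto h
  comul_counit : ∀ h : H,
    TensorProduct.rid k H (TensorProduct.map (LinearMap.id : H →ₗ[k] H) counit (comul h)) = auto h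
  comul_mul : ∀ h h' : H,
    comul (mul h h')
      = TensorProduct.map (TensorProduct.lift mul) (TensorProduct.lift mul)
          (TensorProduct.tensorTensorTensorComm k H H H H (comul h ⊗ₜ[k] comul h'))
  comul_one : comul one = one ⊗ₜ[k] one
  counit_mul : ∀ h h' : H, counit (mul h h') = counit h * counit h'
  counit_one : counit one = 1

/-- A Hom-Hopf algebra: a Hom-bialgebra with an antipode. -/
structure HomHopf (k : Type*) [Field k] (H : Type*) [AddCommGroup H] [Module k H]
    extends HomBialgebra k H where
  antipode : H →ₗ[k] H
  antipode_left : ∀ h : H,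
    TensorProduct.lift mul (TensorProduct.map antipode (LinearMap.id : H →ₗ[k] H) (comul h))
      = counit h • one
  antipode_right : ∀ h : H,
    TensorProduct.lift mul (TensorProduct.map (LinearMap.id : H →ₗ[k] H) antipode (comul h))
      = counit h • one
  antipode_auto : ∀ h : H, antipode (auto h) = auto (antipode h)

/-- A quasitriangular Hom-Hopf algebra `(H, α, R)`. -/
structure QTHomHopf (k : Type*) [Field k] (H : Type*) [AddCommGroup H] [Module k H]
    extends HomHopf k H where
  R : H ⊗[k] H
  qha1a : TensorProduct.lid k H (TensorProduct.map counit (LinearMap.id : H →ₗ[k] H) R) = one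
  qha1b : TensorProduct.rid k H (TensorProduct.map (LinearMap.id : H →ₗ[k] H) counit R) = one
  qha2 : TensorProduct.map comul auto.toLinearMap R
      = TensorProduct.map (TensorProduct.map auto.toLinearMap auto.toLinearMap)
          (TensorProduct.lift mul)
          (TensorProduct.tensorTensorTensorComm k H H H H (R ⊗ₜ[k] R))
  qha3 : TensorProduct.map auto.toLinearMap comul R
      = TensorProduct.map (TensorProduct.lift mul)
          ((TensorProduct.comm k H H).toLinearMap ∘ₗ
            TensorProduct.map auto.toLinearMap auto.toLinearMap)
          (TensorProduct.tensorTensorTensorComm k H H H H (R ⊗ₜ[k] R))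
  qha4 : ∀ h : H,
    TensorProduct.map (TensorProduct.lift mul) (TensorProduct.lift mul)
        (TensorProduct.tensorTensorTensorComm k H H H H
          ((TensorProduct.comm k H H (comul h)) ⊗ₜ[k] R))
      = TensorProduct.map (TensorProduct.lift mul) (TensorProduct.lift mul)
          (TensorProduct.tensorTensorTensorComm k H H H H (R ⊗ₜ[k] comul h))
  qha5 : TensorProduct.map auto.toLinearMap auto.toLinearMap R = R

/-- Triangularity: `R⁻¹ = R² ⊗ R¹`, i.e. `r²R¹ ⊗ r¹R² = 1 ⊗ 1`. -/
def QTHomHopf.IsTriangular {k : Type*} [Field k] {H : Type*} [AddCommGroup H] [Module k H]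
    (HQ : QTHomHopf k H) : Prop :=
  TensorProduct.map (TensorProduct.lift HQ.mul) (TensorProduct.lift HQ.mul)
      (TensorProduct.tensorTensorTensorComm k H H H H
        ((TensorProduct.comm k H H HQ.R) ⊗ₜ[k] HQ.R))
    = HQ.one ⊗ₜ[k] HQ.one

/-- A coquasitriangular Hom-Hopf algebra `(B, β, ⟨|⟩)`. -/
structure CQTHomHopf (k : Type*) [Field k] (B : Type*) [AddCommGroup B] [Module k B]
    extends HomHopf k B where
  form : B →ₗ[k] B →ₗ[k] k
  cha1 : ∀ h g l : B, form (mul h g) (auto l)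
      = LinearMap.mul' k k (TensorProduct.map (form (auto g)) (form (auto h)) (comul l))
  cha2 : ∀ h g l : B, form (auto h) (mul g l)
      = LinearMap.mul' k k
          (TensorProduct.map (form.flip (auto g)) (form.flip (auto l)) (comul h))
  cha3 : ∀ h g : B,
    TensorProduct.lid k B (TensorProduct.map (TensorProduct.lift form)
        ((TensorProduct.lift mul) ∘ₗ (TensorProduct.comm k B B).toLinearMap)
        (TensorProduct.tensorTensorTensorComm k B B B B (comul h ⊗ₜ[k] comul g)))
      = TensorProduct.rid k B
          (TensorProduct.map (TensorProduct.lift mul) (TensorProduct.lift form)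
            (TensorProduct.tensorTensorTensorComm k B B B B (comul h ⊗ₜ[k] comul g)))
  cha4a : ∀ h : B, form one h = counit h
  cha4b : ∀ h : B, form h one = counit h
  cha5 : ∀ h g : B, form (auto h) (auto g) = form h g

/-- Cotriangularity: `⟨h₁|g₁⟩⟨g₂|h₂⟩ = ε(h)ε(g)`. -/
def CQTHomHopf.IsCotriangular {k : Type*} [Field k] {B : Type*} [AddCommGroup B] [Module k B]
    (BC : CQTHomHopf k B) : Prop :=
  ∀ h g : B,
    LinearMap.mul' k k (TensorProduct.map (TensorProduct.lift BC.form)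
        ((TensorProduct.lift BC.form) ∘ₗ (TensorProduct.comm k B B).toLinearMap)
        (TensorProduct.tensorTensorTensorComm k B B B B (BC.comul h ⊗ₜ[k] BC.comul g)))
      = BC.counit h * BC.counit g

/-- A left Hom-module over a Hom-bialgebra `(H, α)`. -/
structure HomModule {k : Type*} [Field k] {H : Type*} [AddCommGroup H] [Module k H]
    (HA : HomBialgebra k H) (M : Type*) [AddCommGroup M] [Module k M] where
  act : H →ₗ[k] M →ₗ[k] M
  auto : M ≃ₗ[k] M
  auto_act : ∀ (h : H) (m : M), auto (act h m) = act (HA.auto h) (auto m)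
  act_act : ∀ (h h' : H) (m : M), act (HA.auto h) (act h' m) = act (HA.mul h h') (auto m)
  one_act : ∀ m : M, act HA.one m = auto m

/-- A left Hom-comodule over a Hom-bialgebra `(B, β)`. -/
structure HomComodule {k : Type*} [Field k] {B : Type*} [AddCommGroup B] [Module k B]
    (BA : HomBialgebra k B) (M : Type*) [AddCommGroup M] [Module k M] where
  coact : M →ₗ[k] B ⊗[k] M
  auto : M ≃ₗ[k] M
  coact_auto : ∀ m : M,
    coact (auto m) = TensorProduct.map BA.auto.toLinearMap auto.toLinearMap (coact m)
  counit_coact : ∀ m : M,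
    TensorProduct.lid k M (TensorProduct.map BA.counit (LinearMap.id : M →ₗ[k] M) (coact m))
      = auto m
  hom_coassoc : ∀ m : M,
    TensorProduct.map BA.auto.toLinearMap coact (coact m)
      = TensorProduct.assoc k B B M
          (TensorProduct.map BA.comul auto.toLinearMap (coact m))

/-- A Hom-algebra `(A, γ)`. -/
structure HomAlgebra (k : Type*) [Field k] (A : Type*) [AddCommGroup A] [Module k A] where
  mul : A →ₗ[k] A →ₗ[k] A
  one : A
  auto : A ≃ₗ[k] A
  auto_mul : ∀ a a' : A, auto (mul a a') = mul (auto a) (auto a')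
  auto_one : auto one = one
  hom_assoc : ∀ a a' a'' : A, mul (auto a) (mul a' a'') = mul (mul a a') (auto a'')
  mul_one' : ∀ a : A, mul a one = auto a
  one_mul' : ∀ a : A, mul one a = auto a

/-- A left Hom-module over a Hom-algebra `(A, γ)`. -/
structure HomModuleAlg {k : Type*} [Field k] {A : Type*} [AddCommGroup A] [Module k A]
    (AA : HomAlgebra k A) (M : Type*) [AddCommGroup M] [Module k M] where
  act : A →ₗ[k] M →ₗ[k] M
  auto : M ≃ₗ[k] M
  auto_act : ∀ (a : A) (m : M), auto (act a m) = act (AA.auto a) (auto m)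
  act_act : ∀ (a a' : A) (m : M), act (AA.auto a) (act a' m) = act (AA.mul a a') (auto m)
  one_act : ∀ m : M, act AA.one m = auto m

/-- An `(H, B)`-Hom-Long dimodule. -/
structure LongDimodule {k : Type*} [Field k] {H B : Type*}
    [AddCommGroup H] [Module k H] [AddCommGroup B] [Module k B]
    (HA : HomBialgebra k H) (BA : HomBialgebra k B)
    (M : Type*) [AddCommGroup M] [Module k M] where
  act : H →ₗ[k] M →ₗ[k] M
  coact : M →ₗ[k] B ⊗[k] M
  auto : M ≃ₗ[k] M
  auto_act : ∀ (h : H) (m : M), auto (act h m) = act (HA.auto h) (auto m)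
  act_act : ∀ (h h' : H) (m : M), act (HA.auto h) (act h' m) = act (HA.mul h h') (auto m)
  one_act : ∀ m : M, act HA.one m = auto m
  coact_auto : ∀ m : M,
    coact (auto m) = TensorProduct.map BA.auto.toLinearMap auto.toLinearMap (coact m)
  counit_coact : ∀ m : M,
    TensorProduct.lid k M (TensorProduct.map BA.counit (LinearMap.id : M →ₗ[k] M) (coact m))
      = auto m
  hom_coassoc : ∀ m : M,
    TensorProduct.map BA.auto.toLinearMap coact (coact m)
      = TensorProduct.assoc k B B M
          (TensorProduct.map BA.comul auto.toLinearMap (coact m))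
  compat : ∀ (h : H) (m : M),
    coact (act h m)
      = TensorProduct.map BA.auto.toLinearMap (act (HA.auto h)) (coact m)

section Helpers

variable {k H B M N : Type*} [Field k]
variable [AddCommGroup H] [Module k H] [AddCommGroup B] [Module k B]
variable [AddCommGroup M] [Module k M] [AddCommGroup N] [Module k N]

/-- The diagonal Hom-action on a tensor product: `h · (m ⊗ n) = h₁·m ⊗ h₂·n`. -/
noncomputable def tAct (comul : H →ₗ[k] H ⊗[k] H)
    (actM : H →ₗ[k] M →ₗ[k] M) (actN : H →ₗ[k] N →ₗ[k] N) :
    H →ₗ[k] (M ⊗[k] N) →ₗ[k] (M ⊗[k] N) :=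
  TensorProduct.curry
    ((TensorProduct.map (TensorProduct.lift actM) (TensorProduct.lift actN)) ∘ₗ
      (TensorProduct.tensorTensorTensorComm k H H M N).toLinearMap ∘ₗ
      (TensorProduct.map comul (LinearMap.id : M ⊗[k] N →ₗ[k] M ⊗[k] N)))

/-- The Hom-coaction on a tensor product: `ρ(m ⊗ n) = β⁻²(m₋₁ n₋₁) ⊗ (m₀ ⊗ n₀)`;
here `bInv2` stands for `β⁻²`. -/
noncomputable def tCoact (mulB : B →ₗ[k] B →ₗ[k] B) (bInv2 : B →ₗ[k] B)
    (coactM : M →ₗ[k] B ⊗[k] M) (coactN : N →ₗ[k] B ⊗[k] N) :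
    (M ⊗[k] N) →ₗ[k] B ⊗[k] (M ⊗[k] N) :=
  (TensorProduct.map (bInv2 ∘ₗ TensorProduct.lift mulB)
      (LinearMap.id : M ⊗[k] N →ₗ[k] M ⊗[k] N)) ∘ₗ
    (TensorProduct.tensorTensorTensorComm k B M B N).toLinearMap ∘ₗ
    (TensorProduct.map coactM coactN)

/-- `m ⊗ n ↦ R² · aM⁻¹(n) ⊗ R¹ · aN⁻¹(m)` (quasitriangular part of the Long braiding). -/
noncomputable def braidQT (R : H ⊗[k] H)
    (actM : H →ₗ[k] M →ₗ[k] M) (actN : H →ₗ[k] N →ₗ[k] N)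
    (aM : M ≃ₗ[k] M) (aN : N ≃ₗ[k] N) : M ⊗[k] N →ₗ[k] N ⊗[k] M :=
  TensorProduct.map (TensorProduct.lift actN) (TensorProduct.lift actM) ∘ₗ
    (TensorProduct.tensorTensorTensorComm k H H N M).toLinearMap ∘ₗ
    TensorProduct.mk k (H ⊗[k] H) (N ⊗[k] M) (TensorProduct.comm k H H R) ∘ₗ
    (TensorProduct.comm k M N).toLinearMap ∘ₗ
    TensorProduct.map aM.symm.toLinearMap aN.symm.toLinearMap

/-- `m ⊗ n ↦ ⟨m₋₁|n₋₁⟩ aN⁻¹(n₀) ⊗ aM⁻¹(m₀)` (coquasitriangular braiding). -/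
noncomputable def braidCQT (form : B →ₗ[k] B →ₗ[k] k)
    (coactM : M →ₗ[k] B ⊗[k] M) (coactN : N →ₗ[k] B ⊗[k] N)
    (aM : M ≃ₗ[k] M) (aN : N ≃ₗ[k] N) : M ⊗[k] N →ₗ[k] N ⊗[k] M :=
  (TensorProduct.comm k M N).toLinearMap ∘ₗ
    TensorProduct.map aM.symm.toLinearMap aN.symm.toLinearMap ∘ₗ
    (TensorProduct.lid k (M ⊗[k] N)).toLinearMap ∘ₗ
    TensorProduct.map (TensorProduct.lift form)
      (LinearMap.id : M ⊗[k] N →ₗ[k] M ⊗[k] N) ∘ₗ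
    (TensorProduct.tensorTensorTensorComm k B M B N).toLinearMap ∘ₗ
    TensorProduct.map coactM coactN

/-- The Long-dimodule braiding
`C(m ⊗ n) = ⟨m₋₁|n₋₁⟩ R² · aN⁻²(n₀) ⊗ R¹ · aM⁻²(m₀)`. -/
noncomputable def braidL (R : H ⊗[k] H) (form : B →ₗ[k] B →ₗ[k] k)
    (actM : H →ₗ[k] M →ₗ[k] M) (actN : H →ₗ[k] N →ₗ[k] N)
    (coactM : M →ₗ[k] B ⊗[k] M) (coactN : N →ₗ[k] B ⊗[k] N)
    (aM : M ≃ₗ[k] M) (aN : N ≃ₗ[k] N) : M ⊗[k] N →ₗ[k] N ⊗[k] M :=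
  braidQT R actM actN (aM.trans aM) (aN.trans aN) ∘ₗ
    (TensorProduct.lid k (M ⊗[k] N)).toLinearMap ∘ₗ
    TensorProduct.map (TensorProduct.lift form)
      (LinearMap.id : M ⊗[k] N →ₗ[k] M ⊗[k] N) ∘ₗ
    (TensorProduct.tensorTensorTensorComm k B M B N).toLinearMap ∘ₗ
    TensorProduct.map coactM coactN

/-- The action of `H ⊗ B` on a Long dimodule:
`(h ⊗ x) ⇀ m = ⟨x|m₋₁⟩ α⁻³(h) · μ⁻¹(m₀)`; `aInv3` stands for `α⁻³`, `muInv` for `μ⁻¹`. -/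
noncomputable def actHB (form : B →ₗ[k] B →ₗ[k] k) (aInv3 : H →ₗ[k] H)
    (act : H →ₗ[k] M →ₗ[k] M) (coact : M →ₗ[k] B ⊗[k] M) (muInv : M →ₗ[k] M) :
    (H ⊗[k] B) →ₗ[k] M →ₗ[k] M :=
  TensorProduct.curry
    ((TensorProduct.lid k M).toLinearMap ∘ₗ
      TensorProduct.map (TensorProduct.lift form)
        (TensorProduct.lift act ∘ₗ TensorProduct.map aInv3 muInv) ∘ₗ
      (TensorProduct.tensorTensorTensorComm k B H B M).toLinearMap ∘ₗ
      TensorProduct.map (TensorProduct.comm k H B).toLinearMap coact)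

/-- The coaction of `H ⊗ B` on a Long dimodule:
`ρ̄(m) = (R² ⊗ β⁻³(m₋₁)) ⊗ (R¹ · μ⁻¹(m₀))`; `bInv3` stands for `β⁻³`. -/
noncomputable def coactHB (R : H ⊗[k] H) (bInv3 : B →ₗ[k] B)
    (act : H →ₗ[k] M →ₗ[k] M) (coact : M →ₗ[k] B ⊗[k] M) (muInv : M →ₗ[k] M) :
    M →ₗ[k] (H ⊗[k] B) ⊗[k] M :=
  TensorProduct.map (TensorProduct.map (LinearMap.id : H →ₗ[k] H) bInv3)
      (TensorProduct.lift act ∘ₗ TensorProduct.map (LinearMap.id : H →ₗ[k] H) muInv) ∘ₗ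
    (TensorProduct.tensorTensorTensorComm k H H B M).toLinearMap ∘ₗ
    TensorProduct.mk k (H ⊗[k] H) (B ⊗[k] M) (TensorProduct.comm k H H R) ∘ₗ
    coact

end Helpers

section Assoc

variable {k U V W : Type*} [Field k]
variable [AddCommGroup U] [Module k U] [AddCommGroup V] [Module k V] [AddCommGroup W] [Module k W]

/-- The Hom-associator `(u ⊗ v) ⊗ w ↦ aU⁻¹(u) ⊗ (v ⊗ aW(w))`. -/
noncomputable def assocL (aU : U ≃ₗ[k] U) (aW : W ≃ₗ[k] W) :
    (U ⊗[k] V) ⊗[k] W →ₗ[k] U ⊗[k] (V ⊗[k] W) :=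
  TensorProduct.map aU.symm.toLinearMap
      (TensorProduct.map (LinearMap.id : V →ₗ[k] V) aW.toLinearMap) ∘ₗ
    (TensorProduct.assoc k U V W).toLinearMap

/-- The inverse Hom-associator `u ⊗ (v ⊗ w) ↦ (aU(u) ⊗ v) ⊗ aW⁻¹(w)`. -/
noncomputable def assocLinv (aU : U ≃ₗ[k] U) (aW : W ≃ₗ[k] W) :
    U ⊗[k] (V ⊗[k] W) →ₗ[k] (U ⊗[k] V) ⊗[k] W :=
  (TensorProduct.assoc k U V W).symm.toLinearMap ∘ₗ
    TensorProduct.map aU.toLinearMap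
      (TensorProduct.map (LinearMap.id : V →ₗ[k] V) aW.symm.toLinearMap)

end Assoc

section HomLongEq

variable {k M : Type*} [Field k] [AddCommGroup M] [Module k M]

/-- `F¹² = F ⊗ μ` on `M ⊗ (M ⊗ M)`. -/
noncomputable def f12 (μ : M ≃ₗ[k] M) (F : M ⊗[k] M →ₗ[k] M ⊗[k] M) :
    M ⊗[k] (M ⊗[k] M) →ₗ[k] M ⊗[k] (M ⊗[k] M) :=
  (TensorProduct.assoc k M M M).toLinearMap ∘ₗ
    TensorProduct.map F μ.toLinearMap ∘ₗ
    (TensorProduct.assoc k M M M).symm.toLinearMap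

/-- `F²³ = μ ⊗ F` on `M ⊗ (M ⊗ M)`. -/
noncomputable def f23 (μ : M ≃ₗ[k] M) (F : M ⊗[k] M →ₗ[k] M ⊗[k] M) :
    M ⊗[k] (M ⊗[k] M) →ₗ[k] M ⊗[k] (M ⊗[k] M) :=
  TensorProduct.map μ.toLinearMap F

/-- `F¹³ = (id ⊗ τ) ∘ (F ⊗ μ) ∘ (id ⊗ τ)` on `M ⊗ (M ⊗ M)`. -/
noncomputable def f13 (μ : M ≃ₗ[k] M) (F : M ⊗[k] M →ₗ[k] M ⊗[k] M) :
    M ⊗[k] (M ⊗[k] M) →ₗ[k] M ⊗[k] (M ⊗[k] M) :=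
  TensorProduct.map (LinearMap.id : M →ₗ[k] M) (TensorProduct.comm k M M).toLinearMap ∘ₗ
    f12 μ F ∘ₗ
    TensorProduct.map (LinearMap.id : M →ₗ[k] M) (TensorProduct.comm k M M).toLinearMap

/-- The cyclic permutation `τ⁽¹²³⁾ : x ⊗ y ⊗ z ↦ z ⊗ x ⊗ y`. -/
noncomputable def cyc123 (k M : Type*) [Field k] [AddCommGroup M] [Module k M] :
    M ⊗[k] (M ⊗[k] M) →ₗ[k] M ⊗[k] (M ⊗[k] M) :=
  (TensorProduct.comm k (M ⊗[k] M) M).toLinearMap ∘ₗ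
    (TensorProduct.assoc k M M M).symm.toLinearMap

end HomLongEq

/-- Composing the braidings attached to `(α ⊗ α)(r)` and `(α ⊗ α)(A)` amounts to acting on
`μ⁻¹(m) ⊗ ν⁻¹(n)` by the componentwise product `r²A¹ ⊗ r¹A²`. The twist by `α ⊗ α` is what lets
Hom-associativity of the actions apply. -/
theorem braidQT_auto_braidQT_auto {k H M N : Type*} [Field k]
    [AddCommGroup H] [Module k H] [AddCommGroup M] [Module k M] [AddCommGroup N] [Module k N]
    (HA : HomBialgebra k H) (MM : HomModule HA M) (NN : HomModule HA N)
    (r A : H ⊗[k] H) (m : M) (n : N) :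
    braidQT (TensorProduct.map HA.auto.toLinearMap HA.auto.toLinearMap r)
        NN.act MM.act NN.auto MM.auto
      (braidQT (TensorProduct.map HA.auto.toLinearMap HA.auto.toLinearMap A)
        MM.act NN.act MM.auto NN.auto (m ⊗ₜ[k] n))
      = TensorProduct.map (MM.act.flip (MM.auto.symm m)) (NN.act.flip (NN.auto.symm n))
          (TensorProduct.map (TensorProduct.lift HA.mul) (TensorProduct.lift HA.mul)
            (TensorProduct.tensorTensorTensorComm k H H H H
              ((TensorProduct.comm k H H r) ⊗ₜ[k] A))) := by
  have hM : ∀ (h : H) (x : M), MM.auto.symm (MM.act (HA.auto h) x)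
      = MM.act h (MM.auto.symm x) := fun h x => by
    rw [LinearEquiv.symm_apply_eq, MM.auto_act, LinearEquiv.apply_symm_apply]
  have hN : ∀ (h : H) (x : N), NN.auto.symm (NN.act (HA.auto h) x)
      = NN.act h (NN.auto.symm x) := fun h x => by
    rw [LinearEquiv.symm_apply_eq, NN.auto_act, LinearEquiv.apply_symm_apply]
  induction r with
  | zero => simp [braidQT]
  | add r s hr hs =>
    simp only [braidQT, LinearMap.comp_apply, LinearMap.add_apply, map_add,
      TensorProduct.add_tmul, TensorProduct.mk_apply] at hr hs ⊢
    rw [hr, hs]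
  | tmul a b =>
    induction A with
    | zero => simp [braidQT]
    | add A A' hA hA' =>
      simp only [braidQT, LinearMap.comp_apply, LinearMap.add_apply, map_add,
        TensorProduct.tmul_add, TensorProduct.mk_apply] at hA hA' ⊢
      rw [hA, hA']
    | tmul c d =>
      simp [braidQT, hM, hN, MM.act_act, NN.act_act]

/-- over a triangular Hom-Hopf algebra `(H, α, R)` and a Hom-Hopf algebra
`(B, β)`: (i) every left `(H, α)`-Hom-module is an `(H,B)`-Hom-Long dimodule with trivial
coaction `ρ(m) = 1_B ⊗ μ(m)`, morphisms of Hom-modules are `B`-colinear, and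
(ii) the braiding `C(m ⊗ n) = R²·ν⁻¹(n) ⊗ R¹·μ⁻¹(m)` is a symmetry. -/
theorem triangular_homModules_symmetric
    {k H B M N : Type*} [Field k]
    [AddCommGroup H] [Module k H] [AddCommGroup B] [Module k B]
    [AddCommGroup M] [Module k M] [AddCommGroup N] [Module k N]
    (HQ : QTHomHopf k H) (htri : HQ.IsTriangular) (BH : HomHopf k B)
    (MM : HomModule HQ.toHomBialgebra M) (NN : HomModule HQ.toHomBialgebra N) :
    (∃ L : LongDimodule HQ.toHomBialgebra BH.toHomBialgebra M,
        L.act = MM.act ∧ L.auto = MM.auto ∧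
        ∀ m : M, L.coact m = BH.one ⊗ₜ[k] MM.auto m) ∧
    (∀ f : M →ₗ[k] N,
      (∀ (h : H) (m : M), f (MM.act h m) = NN.act h (f m)) →
      (∀ m : M, f (MM.auto m) = NN.auto (f m)) →
      ∀ m : M,
        BH.one ⊗ₜ[k] NN.auto (f m)
          = TensorProduct.map (LinearMap.id : B →ₗ[k] B) f (BH.one ⊗ₜ[k] MM.auto m)) ∧
    (braidQT HQ.R NN.act MM.act NN.auto MM.auto ∘ₗ
        braidQT HQ.R MM.act NN.act MM.auto NN.auto
      = LinearMap.id) := by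
  refine ⟨⟨{ act := MM.act
             coact := TensorProduct.mk k B M BH.one ∘ₗ MM.auto.toLinearMap
             auto := MM.auto
             auto_act := MM.auto_act
             act_act := MM.act_act
             one_act := MM.one_act
             coact_auto := fun m => by simp [BH.auto_one]
             counit_coact := fun m => by simp [BH.counit_one]
             hom_coassoc := fun m => by simp [BH.auto_one, BH.comul_one]
             compat := fun h m => by simp [BH.auto_one, MM.auto_act] },
           rfl, rfl, fun m => rfl⟩, ?_, ?_⟩
  · intro f _ hf m
    simp [hf]
  · refine TensorProduct.ext' fun m n => ?_
    have h := braidQT_auto_braidQT_auto HQ.toHomBialgebra MM NN HQ.R HQ.R m n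
    rw [HQ.qha5, htri] at h
    rw [LinearMap.comp_apply, h]
    simp [MM.one_act, NN.one_act]
end

section
/- Let (B,β,⟨|⟩) be a cotriangular Hom-Hopf algebra and (H,α) a Hom-Hopf algebra. (i) Every left (B,β)-Hom-comodule (M,ρ,μ) becomes an (H,B)-Hom-Long dimodule with action h·m=ε(h)μ(m); moreover every morphism of left (B,β)-Hom-comodules is then also H-linear. (ii) For left (B,β)-Hom-comodules (M,μ_M),(N,ν_N), the maps C_{M,N}:M⊗N→N⊗M, C_{M,N}(m⊗n)=⟨m₋₁|n₋₁⟩ ν_N⁻¹(n₀)⊗μ_M⁻¹(m₀), satisfy C_{N,M}∘C_{M,N}=id_{M⊗N}. -/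
/-!
The trivial action `h·m = ε(h)μ(m)` satisfies the Hom-module and Long axioms because `ε` is
multiplicative, unital and `α`-invariant, and a comodule morphism commutes with `μ`, hence with
this action.

For the symmetry, write out `C_{N,M}(C_{M,N}(m ⊗ n))`. Since `ρ` commutes with the structure
automorphisms, it is
`⟨m₋₁|n₋₁⟩⟨β⁻¹(n₀₋₁)|β⁻¹(m₀₋₁)⟩ μ⁻²(m₀₀) ⊗ ν⁻²(n₀₀)`, and `β`-invariance of the form turns the
coefficient into `⟨β(m₋₁)|β(n₋₁)⟩⟨n₀₋₁|m₀₋₁⟩` (`braidCQT_braidContract`). Hom-coassociativity of the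
coactions rewrites this as `⟨m₋₁₁|n₋₁₁⟩⟨n₋₁₂|m₋₁₂⟩ μ⁻¹(m₀) ⊗ ν⁻¹(n₀)`, which by cotriangularity is
`ε(m₋₁)ε(n₋₁) μ⁻¹(m₀) ⊗ ν⁻¹(n₀)` (`doubleContract_comul`), that is `m ⊗ n` by the counit axiom.
-/

open TensorProduct

/-- `(a ⊗ (b ⊗ m)) ⊗ (c ⊗ (d ⊗ n)) ↦ ⟨a|c⟩⟨d|b⟩ aM⁻²(m) ⊗ aN⁻²(n)`: the contraction through which
the double braiding factors after both coactions have been iterated. -/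
noncomputable def doubleContract {k B M N : Type*} [Field k]
    [AddCommGroup B] [Module k B] [AddCommGroup M] [Module k M] [AddCommGroup N] [Module k N]
    (form : B →ₗ[k] B →ₗ[k] k) (aM : M ≃ₗ[k] M) (aN : N ≃ₗ[k] N) :
    (B ⊗[k] (B ⊗[k] M)) ⊗[k] (B ⊗[k] (B ⊗[k] N)) →ₗ[k] M ⊗[k] N :=
  (TensorProduct.lid k (M ⊗[k] N)).toLinearMap ∘ₗ
    TensorProduct.map (TensorProduct.lift form)
      ((TensorProduct.lid k (M ⊗[k] N)).toLinearMap ∘ₗ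
        TensorProduct.map (TensorProduct.lift form.flip)
          (TensorProduct.map (aM.trans aM).symm.toLinearMap (aN.trans aN).symm.toLinearMap) ∘ₗ
        (TensorProduct.tensorTensorTensorComm k B M B N).toLinearMap) ∘ₗ
    (TensorProduct.tensorTensorTensorComm k B (B ⊗[k] M) B (B ⊗[k] N)).toLinearMap

section Contraction

variable {k B M N : Type*} [Field k]
  [AddCommGroup B] [Module k B] [AddCommGroup M] [Module k M] [AddCommGroup N] [Module k N]

@[simp] lemma doubleContract_tmul (form : B →ₗ[k] B →ₗ[k] k) (aM : M ≃ₗ[k] M) (aN : N ≃ₗ[k] N)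
    (a b c d : B) (m : M) (n : N) :
    doubleContract form aM aN ((a ⊗ₜ (b ⊗ₜ m)) ⊗ₜ (c ⊗ₜ (d ⊗ₜ n)))
      = form a c • form d b • (aM.symm (aM.symm m) ⊗ₜ[k] aN.symm (aN.symm n)) := by
  simp [doubleContract, smul_comm (form d b)]

/-- The coaction also commutes with the inverses of the structure automorphisms. -/
lemma HomComodule.coact_auto_symm {BA : HomBialgebra k B} (CM : HomComodule BA M) (m : M) :
    CM.coact (CM.auto.symm m)
      = TensorProduct.map BA.auto.symm.toLinearMap CM.auto.symm.toLinearMap (CM.coact m) := by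
  obtain ⟨m, rfl⟩ := CM.auto.surjective m
  rw [CM.coact_auto, LinearEquiv.symm_apply_apply, ← LinearMap.comp_apply,
    ← TensorProduct.map_comp]
  simp

/-- `m ⊗ n ↦ ⟨m₋₁|n₋₁⟩ aN⁻¹(n₀) ⊗ aM⁻¹(m₀)` as a function of the two coactions, so that the
inner Sweedler components can be treated as independent tensors. -/
noncomputable def braidContract (form : B →ₗ[k] B →ₗ[k] k)
    (aM : M ≃ₗ[k] M) (aN : N ≃ₗ[k] N) : (B ⊗[k] M) ⊗[k] (B ⊗[k] N) →ₗ[k] N ⊗[k] M :=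
  (TensorProduct.comm k M N).toLinearMap ∘ₗ
    TensorProduct.map aM.symm.toLinearMap aN.symm.toLinearMap ∘ₗ
    (TensorProduct.lid k (M ⊗[k] N)).toLinearMap ∘ₗ
    TensorProduct.map (TensorProduct.lift form)
      (LinearMap.id : M ⊗[k] N →ₗ[k] M ⊗[k] N) ∘ₗ
    (TensorProduct.tensorTensorTensorComm k B M B N).toLinearMap

@[simp] lemma braidContract_tmul (form : B →ₗ[k] B →ₗ[k] k) (aM : M ≃ₗ[k] M) (aN : N ≃ₗ[k] N)
    (b c : B) (m : M) (n : N) :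
    braidContract form aM aN ((b ⊗ₜ m) ⊗ₜ (c ⊗ₜ n))
      = form b c • (aN.symm n ⊗ₜ[k] aM.symm m) := by
  simp [braidContract]

lemma braidCQT_tmul (form : B →ₗ[k] B →ₗ[k] k)
    (coactM : M →ₗ[k] B ⊗[k] M) (coactN : N →ₗ[k] B ⊗[k] N)
    (aM : M ≃ₗ[k] M) (aN : N ≃ₗ[k] N) (m : M) (n : N) :
    braidCQT form coactM coactN aM aN (m ⊗ₜ n)
      = braidContract form aM aN (coactM m ⊗ₜ coactN n) := rfl

variable (BC : CQTHomHopf k B)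
  (CM : HomComodule BC.toHomBialgebra M) (CN : HomComodule BC.toHomBialgebra N)

/-- The second braiding, applied after the first: `β`-invariance of the form trades the
factors `β⁻¹` produced by `coact_auto_symm` for factors `β` on the outer Sweedler components. -/
lemma braidCQT_braidContract (x : B ⊗[k] M) (y : B ⊗[k] N) :
    braidCQT BC.form CN.coact CM.coact CN.auto CM.auto
        (braidContract BC.form CM.auto CN.auto (x ⊗ₜ y))
      = doubleContract BC.form CM.auto CN.auto
          (TensorProduct.map BC.auto.toLinearMap CM.coact x ⊗ₜ
            TensorProduct.map BC.auto.toLinearMap CN.coact y) := by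
  induction x using TensorProduct.induction_on with
  | zero => simp
  | add x x' hx hx' => simp only [TensorProduct.add_tmul, map_add, hx, hx']
  | tmul b m =>
  induction y using TensorProduct.induction_on with
  | zero => simp
  | add y y' hy hy' => simp only [TensorProduct.tmul_add, map_add, hy, hy']
  | tmul c n =>
  simp only [braidContract_tmul, map_smul, braidCQT_tmul, HomComodule.coact_auto_symm,
    TensorProduct.map_tmul, LinearEquiv.coe_coe]
  generalize CM.coact m = u
  generalize CN.coact n = v
  induction u using TensorProduct.induction_on with
  | zero => simp
  | add x x' hx hx' =>
    simp only [TensorProduct.tmul_add, TensorProduct.add_tmul, map_add, smul_add, hx, hx']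
  | tmul b' m' =>
  induction v using TensorProduct.induction_on with
  | zero => simp
  | add x x' hx hx' =>
    simp only [TensorProduct.tmul_add, TensorProduct.add_tmul, map_add, smul_add, hx, hx']
  | tmul c' n' =>
  have h := BC.cha5 (BC.auto.symm c') (BC.auto.symm b')
  simp only [LinearEquiv.apply_symm_apply] at h
  simp [BC.cha5, h]

/-- Cotriangularity collapses the contraction of two comultiplications to counits. -/
lemma doubleContract_comul (hcot : BC.IsCotriangular) (x : B ⊗[k] M) (y : B ⊗[k] N) :
    doubleContract BC.form CM.auto CN.auto
        (TensorProduct.assoc k B B M (TensorProduct.map BC.comul CM.auto.toLinearMap x) ⊗ₜ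
          TensorProduct.assoc k B B N (TensorProduct.map BC.comul CN.auto.toLinearMap y))
      = CM.auto.symm (TensorProduct.lid k M (TensorProduct.map BC.counit LinearMap.id x)) ⊗ₜ
          CN.auto.symm (TensorProduct.lid k N (TensorProduct.map BC.counit LinearMap.id y)) := by
  induction x using TensorProduct.induction_on with
  | zero => simp
  | add x x' hx hx' => simp only [TensorProduct.add_tmul, map_add, hx, hx']
  | tmul b m =>
  induction y using TensorProduct.induction_on with
  | zero => simp
  | add y y' hy hy' => simp only [TensorProduct.tmul_add, map_add, hy, hy']
  | tmul c n =>
  -- The coefficient `⟨b₁|c₁⟩⟨c₂|b₂⟩` factors out for arbitrary tensors in place of `Δ b`, `Δ c`.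
  have key : ∀ u v : B ⊗[k] B,
      doubleContract BC.form CM.auto CN.auto
          (TensorProduct.assoc k B B M (u ⊗ₜ CM.auto m) ⊗ₜ
            TensorProduct.assoc k B B N (v ⊗ₜ CN.auto n))
        = LinearMap.mul' k k (TensorProduct.map (TensorProduct.lift BC.form)
            ((TensorProduct.lift BC.form) ∘ₗ (TensorProduct.comm k B B).toLinearMap)
            (TensorProduct.tensorTensorTensorComm k B B B B (u ⊗ₜ[k] v))) •
          (CM.auto.symm m ⊗ₜ[k] CN.auto.symm n) := by
    intro u v
    induction u using TensorProduct.induction_on with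
    | zero => simp
    | add x x' hx hx' => simp only [TensorProduct.add_tmul, map_add, add_smul, hx, hx']
    | tmul b b' =>
    induction v using TensorProduct.induction_on with
    | zero => simp
    | add y y' hy hy' =>
      simp only [TensorProduct.tmul_add, TensorProduct.add_tmul, map_add, add_smul, hy, hy']
    | tmul c c' => simp [mul_smul]
  simp only [TensorProduct.map_tmul, LinearEquiv.coe_coe, key, hcot b c]
  simp [mul_smul, TensorProduct.smul_tmul', smul_comm (BC.counit b)]

end Contraction

/-- over a cotriangular Hom-Hopf algebra `(B, β, ⟨|⟩)` and a Hom-Hopf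
algebra `(H, α)`: (i) every left `(B, β)`-Hom-comodule is an `(H,B)`-Hom-Long dimodule
with trivial action `h·m = ε(h)μ(m)`, morphisms of Hom-comodules are `H`-linear, and
(ii) the braiding `C(m ⊗ n) = ⟨m₋₁|n₋₁⟩ ν⁻¹(n₀) ⊗ μ⁻¹(m₀)` is a symmetry. -/
theorem cotriangular_homComodules_symmetric
    {k H B M N : Type*} [Field k]
    [AddCommGroup H] [Module k H] [AddCommGroup B] [Module k B]
    [AddCommGroup M] [Module k M] [AddCommGroup N] [Module k N]
    (BC : CQTHomHopf k B) (hcot : BC.IsCotriangular) (HH : HomHopf k H)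
    (CM : HomComodule BC.toHomBialgebra M) (CN : HomComodule BC.toHomBialgebra N) :
    (∃ L : LongDimodule HH.toHomBialgebra BC.toHomBialgebra M,
        L.coact = CM.coact ∧ L.auto = CM.auto ∧
        ∀ (h : H) (m : M), L.act h m = HH.counit h • CM.auto m) ∧
    (∀ f : M →ₗ[k] N,
      (∀ m : M, CN.coact (f m)
        = TensorProduct.map (LinearMap.id : B →ₗ[k] B) f (CM.coact m)) →
      (∀ m : M, f (CM.auto m) = CN.auto (f m)) →
      ∀ (h : H) (m : M), f (HH.counit h • CM.auto m) = HH.counit h • CN.auto (f m)) ∧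
    (braidCQT BC.form CN.coact CM.coact CN.auto CM.auto ∘ₗ
        braidCQT BC.form CM.coact CN.coact CM.auto CN.auto
      = LinearMap.id) := by
  refine ⟨⟨⟨HH.counit.smulRight CM.auto.toLinearMap, CM.coact, CM.auto, ?_, ?_, ?_,
    CM.coact_auto, CM.counit_coact, CM.hom_coassoc, ?_⟩, rfl, rfl, fun h m => rfl⟩, ?_, ?_⟩
  · intro h m
    simp [HH.counit_auto]
  · intro h h' m
    simp [HH.counit_auto, HH.counit_mul, mul_smul, smul_comm (HH.counit h)]
  · intro m
    simp [HH.counit_one]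
  · intro h m
    simp [HH.counit_auto, CM.coact_auto, TensorProduct.map_smul_right]
  · intro f _ hf h m
    rw [map_smul, hf]
  · ext m n
    simp only [TensorProduct.AlgebraTensorModule.curry_apply, LinearMap.restrictScalars_self,
      TensorProduct.curry_apply, LinearMap.comp_apply, LinearMap.id_apply]
    rw [braidCQT_tmul BC.form CM.coact, braidCQT_braidContract, CM.hom_coassoc, CN.hom_coassoc,
      doubleContract_comul BC CM CN hcot, CM.counit_coact, CN.counit_coact,
      LinearEquiv.symm_apply_apply, LinearEquiv.symm_apply_apply]
end

section
/- Let (H,α,R) be a triangular Hom-Hopf algebra, (B,β,⟨|⟩) a cotriangular Hom-Hopf algebra, and (M,μ_M),(N,ν_N) (H,B)-Hom-Long dimodules. Then the braiding maps C_{M,N}:M⊗N→N⊗M, C_{M,N}(m⊗n)=⟨m₋₁|n₋₁⟩ R²·ν_N⁻²(n₀)⊗R¹·μ_M⁻²(m₀), satisfy the symmetry condition C_{N,M}∘C_{M,N}=id_{M⊗N}. -/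
/-!
Write `U = μ ⊗ ν` on `M ⊗ N`, let `A(m ⊗ n) = R¹·m ⊗ R²·n` and `A'(m ⊗ n) = R²·m ⊗ R¹·n`, and let
`F(m ⊗ n) = ⟨m₋₁|n₋₁⟩ m₀ ⊗ n₀` and `F'(m ⊗ n) = ⟨n₋₁|m₋₁⟩ m₀ ⊗ n₀`. With `τ` the flip,
`C_{M,N} = τ A U⁻² F` and `C_{N,M} τ = A' U⁻² F'`, so that `C_{N,M} C_{M,N} = A' U⁻² F' A U⁻² F`.

The compatibility of action and coaction, together with the invariance of `R` under `α` and of the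
form under `β`, gives `F' A = A F'` (`formPart_actPair`); invariance also shows that `A`
and `F'` commute with `U` (`auto_actPair`, `formPart_auto`). Triangularity and Hom-associativity give
`A' A = U²` (`actPair_triangular`); cotriangularity and Hom-coassociativity give `F' F = U²`
(`formPart_cotriangular`). Hence the composite is `A' A U⁻⁴ F' F = id`.
-/

open TensorProduct

section BraidingSymmetry

variable {k H B M N M' N' : Type*} [Field k]
variable [AddCommGroup H] [Module k H] [AddCommGroup B] [Module k B]
variable [AddCommGroup M] [Module k M] [AddCommGroup N] [Module k N]
variable [AddCommGroup M'] [Module k M'] [AddCommGroup N'] [Module k N']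

/-- Pairing off the outer `B`-legs: `(b ⊗ m) ⊗ (c ⊗ n) ↦ ⟨b|c⟩ m ⊗ n`. -/
noncomputable def pairLegs (form : B →ₗ[k] B →ₗ[k] k) :
    (B ⊗[k] M) ⊗[k] (B ⊗[k] N) →ₗ[k] M ⊗[k] N :=
  (TensorProduct.lid k (M ⊗[k] N)).toLinearMap ∘ₗ
    TensorProduct.map (TensorProduct.lift form)
      (LinearMap.id : M ⊗[k] N →ₗ[k] M ⊗[k] N) ∘ₗ
    (TensorProduct.tensorTensorTensorComm k B M B N).toLinearMap

lemma pairLegs_tmul (form : B →ₗ[k] B →ₗ[k] k) (b c : B) (m : M) (n : N) :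
    pairLegs form ((b ⊗ₜ[k] m) ⊗ₜ[k] (c ⊗ₜ[k] n)) = form b c • (m ⊗ₜ[k] n) := by
  simp [pairLegs]

/-- `pairLegs` is natural in the module legs, and absorbs any endomorphism of `B` which
preserves the form. -/
lemma pairLegs_map (form : B →ₗ[k] B →ₗ[k] k) (u : B →ₗ[k] B)
    (hu : ∀ b c, form (u b) (u c) = form b c) (f : M →ₗ[k] M') (g : N →ₗ[k] N')
    (x : B ⊗[k] M) (y : B ⊗[k] N) :
    pairLegs form (TensorProduct.map u f x ⊗ₜ[k] TensorProduct.map u g y)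
      = TensorProduct.map f g (pairLegs form (x ⊗ₜ[k] y)) := by
  induction x using TensorProduct.induction_on with
  | zero => simp
  | add x x' hx hx' => simp only [map_add, TensorProduct.add_tmul, hx, hx']
  | tmul b m =>
    induction y using TensorProduct.induction_on with
    | zero => simp
    | add y y' hy hy' => simp only [map_add, TensorProduct.tmul_add, hy, hy']
    | tmul c n => simp [pairLegs_tmul, hu]

lemma pairLegs_comm (form : B →ₗ[k] B →ₗ[k] k) (z : (B ⊗[k] M) ⊗[k] (B ⊗[k] N)) :
    pairLegs form (TensorProduct.comm k _ _ z)
      = TensorProduct.comm k _ _ (pairLegs form.flip z) := by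
  refine LinearMap.congr_fun (f := pairLegs form ∘ₗ (TensorProduct.comm k _ _).toLinearMap)
    (g := (TensorProduct.comm k _ _).toLinearMap ∘ₗ pairLegs form.flip) ?_ z
  ext b m c n
  simp [pairLegs_tmul]

/-- The action of `H ⊗ H` on `M ⊗ N`: `a ⊗ b` sends `m ⊗ n` to `a·m ⊗ b·n`. -/
noncomputable def actPair (actM : H →ₗ[k] M →ₗ[k] M) (actN : H →ₗ[k] N →ₗ[k] N) :
    H ⊗[k] H →ₗ[k] M ⊗[k] N →ₗ[k] M ⊗[k] N :=
  TensorProduct.homTensorHomMap (RingHom.id k) M N M N ∘ₗ TensorProduct.map actM actN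

lemma actPair_tmul (actM : H →ₗ[k] M →ₗ[k] M) (actN : H →ₗ[k] N →ₗ[k] N) (a b : H) :
    actPair actM actN (a ⊗ₜ[k] b) = TensorProduct.map (actM a) (actN b) := by
  simp [actPair]

/-- `F(m ⊗ n) = ⟨m₋₁|n₋₁⟩ m₀ ⊗ n₀`. -/
noncomputable def formPart (form : B →ₗ[k] B →ₗ[k] k)
    (coactM : M →ₗ[k] B ⊗[k] M) (coactN : N →ₗ[k] B ⊗[k] N) : M ⊗[k] N →ₗ[k] M ⊗[k] N :=
  pairLegs form ∘ₗ TensorProduct.map coactM coactN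

lemma formPart_comm (form : B →ₗ[k] B →ₗ[k] k)
    (coactM : M →ₗ[k] B ⊗[k] M) (coactN : N →ₗ[k] B ⊗[k] N) (w : M ⊗[k] N) :
    formPart form coactN coactM (TensorProduct.comm k M N w)
      = TensorProduct.comm k M N (formPart form.flip coactM coactN w) := by
  induction w using TensorProduct.induction_on with
  | zero => simp
  | add x y hx hy => simp only [map_add, hx, hy]
  | tmul m n => simp [formPart, ← pairLegs_comm]

lemma actPair_comm (actM : H →ₗ[k] M →ₗ[k] M) (actN : H →ₗ[k] N →ₗ[k] N) (T : H ⊗[k] H)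
    (w : M ⊗[k] N) :
    actPair actN actM (TensorProduct.comm k H H T) (TensorProduct.comm k M N w)
      = TensorProduct.comm k M N (actPair actM actN T w) := by
  induction T using TensorProduct.induction_on with
  | zero => simp
  | add x y hx hy => simp only [map_add, LinearMap.add_apply, hx, hy]
  | tmul a b => simp [actPair_tmul, TensorProduct.map_comm]

/-- The factorisation `C_{M,N} = τ A U⁻² F`. -/
lemma braidL_apply (R : H ⊗[k] H) (form : B →ₗ[k] B →ₗ[k] k)
    (actM : H →ₗ[k] M →ₗ[k] M) (actN : H →ₗ[k] N →ₗ[k] N)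
    (coactM : M →ₗ[k] B ⊗[k] M) (coactN : N →ₗ[k] B ⊗[k] N)
    (aM : M ≃ₗ[k] M) (aN : N ≃ₗ[k] N) (w : M ⊗[k] N) :
    braidL R form actM actN coactM coactN aM aN w
      = TensorProduct.comm k M N (actPair actM actN R
          ((TensorProduct.congr aM aN).symm ((TensorProduct.congr aM aN).symm
            (formPart form coactM coactN w)))) := by
  have key : ∀ z : M ⊗[k] N, braidQT R actM actN (aM.trans aM) (aN.trans aN) z
      = TensorProduct.comm k M N (actPair actM actN R
          ((TensorProduct.congr aM aN).symm ((TensorProduct.congr aM aN).symm z))) := by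
    intro z
    induction z using TensorProduct.induction_on with
    | zero => simp
    | add x y hx hy => simp only [map_add, hx, hy]
    | tmul m n =>
      simp only [braidQT, LinearMap.comp_apply, TensorProduct.map_tmul, LinearEquiv.coe_coe,
        TensorProduct.comm_tmul, TensorProduct.mk_apply, TensorProduct.congr_symm_tmul]
      induction R using TensorProduct.induction_on with
      | zero => simp
      | add x y hx hy => simp only [map_add, TensorProduct.add_tmul, LinearMap.add_apply, hx, hy]
      | tmul a b => simp [actPair_tmul]
  exact key _

section Dimodules

variable (HQ : QTHomHopf k H) (BC : CQTHomHopf k B)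
variable (LM : LongDimodule HQ.toHomBialgebra BC.toHomBialgebra M)
variable (LN : LongDimodule HQ.toHomBialgebra BC.toHomBialgebra N)

lemma formPart_auto (w : M ⊗[k] N) :
    formPart BC.form.flip LM.coact LN.coact (TensorProduct.congr LM.auto LN.auto w)
      = TensorProduct.congr LM.auto LN.auto (formPart BC.form.flip LM.coact LN.coact w) := by
  induction w using TensorProduct.induction_on with
  | zero => simp
  | add x y hx hy => simp only [map_add, hx, hy]
  | tmul m n =>
    simp only [formPart, LinearMap.comp_apply, TensorProduct.congr_tmul, TensorProduct.map_tmul,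
      LM.coact_auto, LN.coact_auto]
    rw [pairLegs_map _ _ fun b c => BC.cha5 c b]
    rfl

lemma auto_actPair_map (T : H ⊗[k] H) (w : M ⊗[k] N) :
    TensorProduct.congr LM.auto LN.auto (actPair LM.act LN.act T w)
      = actPair LM.act LN.act
          (TensorProduct.map HQ.auto.toLinearMap HQ.auto.toLinearMap T)
          (TensorProduct.congr LM.auto LN.auto w) := by
  induction T using TensorProduct.induction_on with
  | zero => simp
  | add x y hx hy => simp only [map_add, LinearMap.add_apply, hx, hy]
  | tmul a b =>
    induction w using TensorProduct.induction_on with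
    | zero => simp
    | add x y hx hy => simp only [map_add, hx, hy]
    | tmul m n => simp [actPair_tmul, LM.auto_act, LN.auto_act]

lemma auto_actPair (w : M ⊗[k] N) :
    TensorProduct.congr LM.auto LN.auto (actPair LM.act LN.act HQ.R w)
      = actPair LM.act LN.act HQ.R (TensorProduct.congr LM.auto LN.auto w) := by
  rw [auto_actPair_map, HQ.qha5]

lemma formPart_actPair (w : M ⊗[k] N) :
    formPart BC.form.flip LM.coact LN.coact (actPair LM.act LN.act HQ.R w)
      = actPair LM.act LN.act HQ.R (formPart BC.form.flip LM.coact LN.coact w) := by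
  have key : ∀ T : H ⊗[k] H,
      formPart BC.form.flip LM.coact LN.coact (actPair LM.act LN.act T w)
        = actPair LM.act LN.act (TensorProduct.map HQ.auto.toLinearMap HQ.auto.toLinearMap T)
            (formPart BC.form.flip LM.coact LN.coact w) := by
    intro T
    induction T using TensorProduct.induction_on with
    | zero => simp
    | add x y hx hy => simp only [map_add, LinearMap.add_apply, hx, hy]
    | tmul a b =>
      induction w using TensorProduct.induction_on with
      | zero => simp
      | add x y hx hy => simp only [map_add, hx, hy]
      | tmul m n =>
        simp only [formPart, LinearMap.comp_apply, actPair_tmul, TensorProduct.map_tmul,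
          LM.compat, LN.compat]
        rw [pairLegs_map _ _ fun b c => BC.cha5 c b]
        rfl
  rw [key, HQ.qha5]

/-- Hom-associativity of the action of `H ⊗ H` on `M ⊗ N`. -/
lemma actPair_actPair (T S : H ⊗[k] H) (w : M ⊗[k] N) :
    actPair LM.act LN.act (TensorProduct.map HQ.auto.toLinearMap HQ.auto.toLinearMap T)
        (actPair LM.act LN.act S w)
      = actPair LM.act LN.act
          (TensorProduct.map (TensorProduct.lift HQ.mul) (TensorProduct.lift HQ.mul)
            (TensorProduct.tensorTensorTensorComm k H H H H (T ⊗ₜ[k] S)))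
          (TensorProduct.congr LM.auto LN.auto w) := by
  induction T using TensorProduct.induction_on with
  | zero => simp
  | add x y hx hy => simp only [map_add, TensorProduct.add_tmul, LinearMap.add_apply, hx, hy]
  | tmul a b =>
    induction S using TensorProduct.induction_on with
    | zero => simp
    | add x y hx hy => simp only [map_add, TensorProduct.tmul_add, LinearMap.add_apply, hx, hy]
    | tmul c d =>
      induction w using TensorProduct.induction_on with
      | zero => simp
      | add x y hx hy => simp only [map_add, hx, hy]
      | tmul m n => simp [actPair_tmul, LM.act_act, LN.act_act]

lemma actPair_triangular (htri : HQ.IsTriangular) (w : M ⊗[k] N) :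
    actPair LM.act LN.act (TensorProduct.comm k H H HQ.R) (actPair LM.act LN.act HQ.R w)
      = TensorProduct.congr LM.auto LN.auto (TensorProduct.congr LM.auto LN.auto w) := by
  have hinv : TensorProduct.map HQ.auto.toLinearMap HQ.auto.toLinearMap
      (TensorProduct.comm k H H HQ.R) = TensorProduct.comm k H H HQ.R := by
    rw [TensorProduct.map_comm, HQ.qha5]
  have hone : ∀ z : M ⊗[k] N, actPair LM.act LN.act (HQ.one ⊗ₜ[k] HQ.one) z
      = TensorProduct.congr LM.auto LN.auto z := by
    intro z
    induction z using TensorProduct.induction_on with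
    | zero => simp
    | add x y hx hy => simp only [map_add, hx, hy]
    | tmul m n => simp [actPair_tmul, LM.one_act, LN.one_act]
  rw [← hinv, actPair_actPair, htri, hone]

/-- Pairing off two legs on each side contributes the scalar `⟨b|c⟩⟨c'|b'⟩`; for `X = Δ(h)` and
`Y = Δ(g)` it is the left-hand side of cotriangularity. -/
lemma pairLegs_pairLegs_assoc (X Y : B ⊗[k] B) (m : M) (n : N) :
    pairLegs BC.form.flip (pairLegs BC.form
        (TensorProduct.assoc k B B M (X ⊗ₜ[k] m) ⊗ₜ[k] TensorProduct.assoc k B B N (Y ⊗ₜ[k] n)))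
      = LinearMap.mul' k k (TensorProduct.map (TensorProduct.lift BC.form)
          ((TensorProduct.lift BC.form) ∘ₗ (TensorProduct.comm k B B).toLinearMap)
          (TensorProduct.tensorTensorTensorComm k B B B B (X ⊗ₜ[k] Y))) • (m ⊗ₜ[k] n) := by
  induction X using TensorProduct.induction_on with
  | zero => simp
  | add x y hx hy => simp only [map_add, TensorProduct.add_tmul, hx, hy, add_smul]
  | tmul a b =>
    induction Y using TensorProduct.induction_on with
    | zero => simp
    | add x y hx hy =>
      simp only [map_add, TensorProduct.add_tmul, TensorProduct.tmul_add, hx, hy, add_smul]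
    | tmul c d => simp [pairLegs_tmul, smul_smul]

lemma formPart_cotriangular (hcot : BC.IsCotriangular) (w : M ⊗[k] N) :
    formPart BC.form.flip LM.coact LN.coact (formPart BC.form LM.coact LN.coact w)
      = TensorProduct.congr LM.auto LN.auto (TensorProduct.congr LM.auto LN.auto w) := by
  have split : ∀ (x : B ⊗[k] M) (y : B ⊗[k] N),
      pairLegs BC.form.flip (pairLegs BC.form
        (TensorProduct.assoc k B B M (TensorProduct.map BC.comul LM.auto.toLinearMap x) ⊗ₜ[k]
          TensorProduct.assoc k B B N (TensorProduct.map BC.comul LN.auto.toLinearMap y)))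
      = TensorProduct.congr LM.auto LN.auto
          (TensorProduct.lid k M (TensorProduct.map BC.counit LinearMap.id x) ⊗ₜ[k]
            TensorProduct.lid k N (TensorProduct.map BC.counit LinearMap.id y)) := by
    intro x y
    induction x using TensorProduct.induction_on with
    | zero => simp
    | add x x' hx hx' => simp only [map_add, TensorProduct.add_tmul, hx, hx']
    | tmul b m =>
      induction y using TensorProduct.induction_on with
      | zero => simp
      | add y y' hy hy' => simp only [map_add, TensorProduct.tmul_add, hy, hy']
      | tmul c n =>
        simp only [TensorProduct.map_tmul, pairLegs_pairLegs_assoc, hcot b c]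
        simp [TensorProduct.smul_tmul', TensorProduct.tmul_smul, smul_smul, mul_comm]
  induction w using TensorProduct.induction_on with
  | zero => simp
  | add x y hx hy => simp only [map_add, hx, hy]
  | tmul m n =>
    simp only [formPart, LinearMap.comp_apply, TensorProduct.map_tmul]
    -- Invariance of the form inserts the `β` needed on the outer legs for Hom-coassociativity.
    rw [← pairLegs_map BC.form BC.auto.toLinearMap BC.cha5 LM.coact LN.coact,
      LM.hom_coassoc, LN.hom_coassoc, split, LM.counit_coact, LN.counit_coact,
      TensorProduct.congr_tmul LM.auto LN.auto m n]

end Dimodules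

end BraidingSymmetry

/-- if `(H, α, R)` is triangular and `(B, β, ⟨|⟩)` is cotriangular, then the
Long braiding `C_{M,N}(m ⊗ n) = ⟨m₋₁|n₋₁⟩ R²·ν⁻²(n₀) ⊗ R¹·μ⁻²(m₀)` satisfies the
symmetry condition `C_{N,M} ∘ C_{M,N} = id`. -/
theorem long_braiding_symmetric
    {k H B M N : Type*} [Field k]
    [AddCommGroup H] [Module k H] [AddCommGroup B] [Module k B]
    [AddCommGroup M] [Module k M] [AddCommGroup N] [Module k N]
    (HQ : QTHomHopf k H) (htri : HQ.IsTriangular)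
    (BC : CQTHomHopf k B) (hcot : BC.IsCotriangular)
    (LM : LongDimodule HQ.toHomBialgebra BC.toHomBialgebra M)
    (LN : LongDimodule HQ.toHomBialgebra BC.toHomBialgebra N) :
    braidL HQ.R BC.form LN.act LM.act LN.coact LM.coact LN.auto LM.auto ∘ₗ
        braidL HQ.R BC.form LM.act LN.act LM.coact LN.coact LM.auto LN.auto
      = LinearMap.id := by
  refine LinearMap.ext fun w => ?_
  have hsymm : ∀ z : M ⊗[k] N,
      (TensorProduct.congr LN.auto LM.auto).symm (TensorProduct.comm k M N z)
        = TensorProduct.comm k M N ((TensorProduct.congr LM.auto LN.auto).symm z) := by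
    intro z
    induction z using TensorProduct.induction_on with
    | zero => simp
    | add x y hx hy => simp only [map_add, hx, hy]
    | tmul m n => simp
  have hact : ∀ z : M ⊗[k] N,
      actPair LN.act LM.act HQ.R (TensorProduct.comm k M N z)
        = TensorProduct.comm k M N
            (actPair LM.act LN.act (TensorProduct.comm k H H HQ.R) z) := by
    intro z
    rw [← actPair_comm, TensorProduct.comm_comm]
  have hFU : ∀ z : M ⊗[k] N, formPart BC.form.flip LM.coact LN.coact
      ((TensorProduct.congr LM.auto LN.auto).symm z)
        = (TensorProduct.congr LM.auto LN.auto).symm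
            (formPart BC.form.flip LM.coact LN.coact z) := by
    intro z
    rw [LinearEquiv.eq_symm_apply, ← formPart_auto, LinearEquiv.apply_symm_apply]
  have hAU : ∀ z : M ⊗[k] N, (TensorProduct.congr LM.auto LN.auto).symm
      (actPair LM.act LN.act HQ.R z)
        = actPair LM.act LN.act HQ.R ((TensorProduct.congr LM.auto LN.auto).symm z) := by
    intro z
    rw [LinearEquiv.symm_apply_eq, auto_actPair, LinearEquiv.apply_symm_apply]
  rw [LinearMap.comp_apply, braidL_apply, braidL_apply, formPart_comm, hsymm, hsymm, hact,
    TensorProduct.comm_comm, formPart_actPair, hFU, hFU,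
    formPart_cotriangular HQ BC LM LN hcot, hAU, hAU,
    actPair_triangular HQ BC LM LN htri]
  simp only [LinearEquiv.symm_apply_apply, LinearEquiv.apply_symm_apply, LinearMap.id_apply]
end

section
/- Let (H,α) be a Hom-bialgebra and let (M,·,ρ,μ) be an (H,α)-Hom-Long dimodule, i.e. a left (H,α)-Hom-module and left (H,α)-Hom-comodule with ρ(h·m)=α(m₋₁)⊗α(h)·m₀ for all h∈H, m∈M. Then the linear map R_M:M⊗M→M⊗M defined by R_M(m⊗n)=n₋₁·m⊗n₀ is a solution of the Hom-Long equation: (R_M⊗μ)∘(μ⊗R_M)=(μ⊗R_M)∘(R_M⊗μ) on M⊗M⊗M. -/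
/-! On `l ⊗ m ⊗ n` both composites equal
`α(m₋₁)·μ(l) ⊗ α(n₋₁)·m₀ ⊗ μ(n₀)`. For `R¹² ∘ R²³` this is the dimodule compatibility
`ρ(h·m) = α(m₋₁) ⊗ α(h)·m₀` with `h = n₋₁`; for `R²³ ∘ R¹²` it follows from
`μ(h·l) = α(h)·μ(l)` and `ρ(μ(n)) = α(n₋₁) ⊗ μ(n₀)`. Sweedler notation is made literal by
writing `ρ(m)` and `ρ(n)` as finite sums of pure tensors. -/

open TensorProduct

/-- The map `R_M(m ⊗ n) = n₋₁·m ⊗ n₀` associated to an `(H, α)`-Hom-Long dimodule. -/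
noncomputable def longRmap {k H M : Type*} [Field k]
    [AddCommGroup H] [Module k H] [AddCommGroup M] [Module k M]
    (HA : HomBialgebra k H) (LM : LongDimodule HA HA M) :
    M ⊗[k] M →ₗ[k] M ⊗[k] M :=
  TensorProduct.map (TensorProduct.lift LM.act) (LinearMap.id : M →ₗ[k] M) ∘ₗ
    TensorProduct.map (TensorProduct.comm k M H).toLinearMap (LinearMap.id : M →ₗ[k] M) ∘ₗ
    (TensorProduct.assoc k M H M).symm.toLinearMap ∘ₗ
    TensorProduct.map (LinearMap.id : M →ₗ[k] M) LM.coact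

theorem longRmap_tmul {k H M : Type*} [Field k]
    [AddCommGroup H] [Module k H] [AddCommGroup M] [Module k M]
    (HA : HomBialgebra k H) (LM : LongDimodule HA HA M) (m n : M) :
    longRmap HA LM (m ⊗ₜ[k] n)
      = TensorProduct.map (LM.act.flip m) LinearMap.id (LM.coact n) := by
  simp only [longRmap, LinearMap.comp_apply, TensorProduct.map_tmul, LinearMap.id_apply]
  induction LM.coact n using TensorProduct.induction_on with
  | zero => simp
  | tmul h x => simp
  | add x y hx hy =>
    rw [TensorProduct.tmul_add, map_add, map_add, map_add, map_add, hx, hy]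

/-- for an `(H, α)`-Hom-Long dimodule `M`, the map
`R_M(m ⊗ n) = n₋₁·m ⊗ n₀` is a solution of the Hom-Long equation. -/
theorem longRmap_solves_homLong_equation
    {k H M : Type*} [Field k]
    [AddCommGroup H] [Module k H] [AddCommGroup M] [Module k M]
    (HA : HomBialgebra k H) (LM : LongDimodule HA HA M) :
    f12 LM.auto (longRmap HA LM) ∘ₗ f23 LM.auto (longRmap HA LM)
      = f23 LM.auto (longRmap HA LM) ∘ₗ f12 LM.auto (longRmap HA LM) := by
  apply TensorProduct.ext'
  intro l z
  induction z using TensorProduct.induction_on with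
  | zero => simp
  | add x y hx hy => rw [TensorProduct.tmul_add, map_add, map_add, hx, hy]
  | tmul m n =>
    obtain ⟨S, hS⟩ := TensorProduct.exists_finset (LM.coact m)
    obtain ⟨T, hT⟩ := TensorProduct.exists_finset (LM.coact n)
    simp only [f12, f23, LinearMap.comp_apply, TensorProduct.map_tmul, LinearEquiv.coe_coe,
      TensorProduct.assoc_symm_tmul, longRmap_tmul, LM.coact_auto, LM.compat, hS, hT, map_sum,
      TensorProduct.tmul_sum, TensorProduct.sum_tmul, TensorProduct.assoc_tmul,
      LinearMap.flip_apply, LinearMap.id_apply, LM.auto_act]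
    -- The two sides are the same double sum over `T` and `S`, in opposite orders.
    exact Finset.sum_comm
end
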